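/- arXiv:math/0702117 — 2 statements merged into one kernel-verified Lean document; each statement's English description precedes it below -/
import Mathlib

section
/- A hyperbolic group G contains only finitely many conjugacy classes of torsion elements: there exists a finite subset T of G such that every element of G of finite order is conjugate in G to an element of T. -/
/-- The word metric on a group `G` with respect to a generating set `S`:
`wordDist S g h` is the least length of a word in `S ∪ S⁻¹` representing `g⁻¹ * h`. -/
noncomputable def wordDist {G : Type*} [Group G] (S : Set G) (g h : G) : ℝ :=
  sInf {r : ℝ | ∃ l : List G, (∀ x ∈ l, x ∈ S ∨ x⁻¹ ∈ S) ∧ l.prod = g⁻¹ * h ∧ r = l.length}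

/-- The Gromov product `(x|y)_w` with respect to the word metric for `S`. -/
noncomputable def gromovProd {G : Type*} [Group G] (S : Set G) (w x y : G) : ℝ :=
  (wordDist S x w + wordDist S y w - wordDist S x y) / 2

/-- A group is (Gromov) hyperbolic if it admits a finite generating set `S` such that
the word metric `d_S` satisfies the Gromov product four-point condition for some `δ ≥ 0`. -/
def IsHyperbolicGroup (G : Type*) [Group G] : Prop :=
  ∃ S : Set G, S.Finite ∧ Subgroup.closure S = ⊤ ∧
    ∃ δ : ℝ, 0 ≤ δ ∧ ∀ w x y z : G,
      gromovProd S w x y ≥ min (gromovProd S w x z) (gromovProd S w y z) - δ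

/-- Words of length `n` representing `g`. -/
def IsWordLen {G : Type*} [Group G] (S : Set G) (g : G) (n : ℕ) : Prop :=
  ∃ l : List G, (∀ x ∈ l, x ∈ S ∨ x⁻¹ ∈ S) ∧ l.prod = g ∧ l.length = n

lemma exists_len {G : Type*} [Group G] (S : Set G) (hS : Subgroup.closure S = ⊤) :
    ∃ len : G → ℕ, (∀ g, IsWordLen S g (len g)) ∧ (∀ g n, IsWordLen S g n → len g ≤ n) ∧
      ∀ g h, wordDist S g h = len (g⁻¹ * h) := by
  classical
  have hex : ∀ g : G, ∃ n, IsWordLen S g n := by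
    intro g
    have hg : g ∈ Subgroup.closure S := by rw [hS]; trivial
    rw [← Subgroup.mem_toSubmonoid, Subgroup.closure_toSubmonoid] at hg
    obtain ⟨l, hl, hp⟩ := Submonoid.exists_list_of_mem_closure hg
    exact ⟨l.length, l, fun x hx => by simpa using hl x hx, hp, rfl⟩
  refine ⟨fun g => Nat.find (hex g), fun g => Nat.find_spec (hex g),
    fun g n h => Nat.find_min' (hex g) h, ?_⟩
  intro g h
  apply IsLeast.csInf_eq
  constructor
  · obtain ⟨l, hl, hp, hn⟩ := Nat.find_spec (hex (g⁻¹ * h))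
    exact ⟨l, hl, hp, by simp only [hn]⟩
  · rintro r ⟨l, hl, hp, rfl⟩
    exact_mod_cast Nat.find_min' (hex (g⁻¹ * h)) ⟨l, hl, hp, rfl⟩

lemma ball_finite {G : Type*} [Group G] (S : Set G) (hS : S.Finite) (N : ℕ) :
    {g : G | ∃ n ≤ N, IsWordLen S g n}.Finite := by
  induction N with
  | zero =>
    refine (Set.finite_singleton (1 : G)).subset ?_
    rintro g ⟨n, hn, l, hl, hp, hlen⟩
    have : l = [] := List.length_eq_zero_iff.mp (by omega)
    subst this
    simpa using hp.symm
  | succ N ih =>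
    have hU : (S ∪ S⁻¹).Finite := hS.union hS.inv
    refine ((Set.finite_singleton (1 : G)).union
      (Set.Finite.image2 (fun a b => a * b) hU ih)).subset ?_
    rintro g ⟨n, hn, l, hl, hp, hlen⟩
    cases l with
    | nil => left; simpa using hp.symm
    | cons a l =>
      right
      refine ⟨a, ?_, l.prod, ⟨l.length, ?_, l, fun x hx => hl x (by simp [hx]), rfl, rfl⟩, ?_⟩
      · simpa using hl a (by simp)
      · simp at hlen; omega
      · simpa using hp

/-- A hyperbolic group contains only finitely many conjugacy classes of torsion
elements. -/
theorem stmt_11 {G : Type*} [Group G] (hG : IsHyperbolicGroup G) :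
    ∃ T : Finset G, ∀ g : G, (∃ n : ℕ, 1 ≤ n ∧ g ^ n = 1) →
      ∃ t ∈ T, ∃ u : G, u * t * u⁻¹ = g := by
  classical
  obtain ⟨S, hSf, hS, δ, hδ, hyp⟩ := hG
  obtain ⟨len, hlen, hmin, hd⟩ := exists_len S hS
  refine ⟨(ball_finite S hSf ⌊4 * δ + 1⌋₊).toFinset, ?_⟩
  rintro g ⟨n, hn, hgn⟩
  have hfin : (Set.range fun i : ℤ => len (g ^ i)).Finite := by
    have hf : ((Subgroup.zpowers g : Subgroup G) : Set G).Finite :=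
      (isOfFinOrder_iff_pow_eq_one.mpr ⟨n, hn, hgn⟩).finite_zpowers
    refine (hf.image len).subset ?_
    rintro _ ⟨i, rfl⟩
    exact ⟨g ^ i, ⟨i, rfl⟩, rfl⟩
  have hex : ∃ R : ℕ, ∃ x : G, ∀ i : ℤ, len (x⁻¹ * g ^ i) ≤ R := by
    obtain ⟨R, hR⟩ := hfin.bddAbove
    exact ⟨R, 1, fun i => by simpa using hR ⟨i, rfl⟩⟩
  set R := Nat.find hex with hRdef
  obtain ⟨x, hx⟩ := Nat.find_spec hex
  rw [← hRdef] at hx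
  obtain ⟨l, hl, hp, hln⟩ := hlen (x⁻¹ * (g * x))
  set L := len (x⁻¹ * (g * x)) with hL
  set m := x * (l.take (L / 2)).prod with hm
  have hsplit := List.prod_take_mul_prod_drop l (L / 2)
  have h1 : len (x⁻¹ * m) ≤ L / 2 := by
    apply hmin
    refine ⟨l.take (L / 2), fun y hy => hl y (List.mem_of_mem_take hy), by simp [hm], ?_⟩
    simp; omega
  have h2 : len ((g * x)⁻¹ * m) ≤ L - L / 2 := by
    apply hmin
    refine ⟨((l.drop (L / 2)).map fun y => y⁻¹).reverse, ?_, ?_, by simp [hln]⟩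
    · intro y hy
      simp only [List.mem_reverse, List.mem_map] at hy
      obtain ⟨z, hz, rfl⟩ := hy
      have := hl z (List.mem_of_mem_drop hz)
      rw [inv_inv]; tauto
    · rw [← List.prod_inv_reverse, hm]
      have e : g * x = x * ((l.take (L / 2)).prod * (l.drop (L / 2)).prod) := by
        rw [hsplit, hp]; group
      rw [e]; group
  have h3 : ∃ i : ℤ, R ≤ len (m⁻¹ * g ^ i) := by
    by_contra! hc
    have hpos : 0 < R := lt_of_le_of_lt (Nat.zero_le _) (hc 0)
    have := Nat.find_min' hex (m := R - 1) ⟨m, fun i => by have := hc i; omega⟩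
    omega
  obtain ⟨i, hi⟩ := h3
  have h4 := hx i
  have h5 : len ((g * x)⁻¹ * g ^ i) ≤ R := by
    have := hx (i - 1)
    have e : (g * x)⁻¹ * g ^ i = x⁻¹ * g ^ (i - 1) := by
      rw [zpow_sub_one, mul_inv_rev, mul_assoc, (Commute.zpow_self g i).inv_right.eq]
    rwa [e]
  have H := hyp (g ^ i) x (g * x) m
  simp only [gromovProd, hd, ← hL] at H
  have h2' : len ((g * x)⁻¹ * m) * 2 ≤ L + 1 := by omega
  have h1' : len (x⁻¹ * m) * 2 ≤ L + 1 := by omega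
  have hi' : (R : ℝ) ≤ len (m⁻¹ * g ^ i) := by exact_mod_cast hi
  have h4' : (len (x⁻¹ * g ^ i) : ℝ) ≤ R := by exact_mod_cast h4
  have h5' : (len ((g * x)⁻¹ * g ^ i) : ℝ) ≤ R := by exact_mod_cast h5
  have h1'' : (len (x⁻¹ * m) : ℝ) * 2 ≤ L + 1 := by exact_mod_cast h1'
  have h2'' : (len ((g * x)⁻¹ * m) : ℝ) * 2 ≤ L + 1 := by exact_mod_cast h2'
  have hfinal : (L : ℝ) ≤ 4 * δ + 1 := by
    rcases min_choice ((len (x⁻¹ * g ^ i) + len (m⁻¹ * g ^ i) - len (x⁻¹ * m) : ℝ) / 2)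
      ((len ((g * x)⁻¹ * g ^ i) + len (m⁻¹ * g ^ i) - len ((g * x)⁻¹ * m) : ℝ) / 2) with h | h <;>
    · rw [h] at H
      linarith
  refine ⟨x⁻¹ * (g * x), ?_, x, by group⟩
  simp only [Set.Finite.mem_toFinset, Set.mem_setOf_eq]
  exact ⟨L, Nat.le_floor hfinal, hlen _⟩
end

section
/- Let G be a torsion-free hyperbolic group, let h ∈ G be a nontrivial element, and let ω ∈ G. Then ω is conjugate in G to at most one element of the cyclic subgroup ⟨h⟩: if ω is conjugate to h^m and to h^n for integers m, n, then m = n. -/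
/-- Abstract hyperbolic length function. -/
structure HypLen {G : Type*} [Group G] (ell : G → ℕ) (D : ℕ) : Prop where
  one : ell 1 = 0
  inv : ∀ g, ell g⁻¹ = ell g
  mul : ∀ g h, ell (g * h) ≤ ell g + ell h
  fin : ∀ R : ℕ, {g | ell g ≤ R}.Finite
  geo : ∀ g r, r ≤ ell g → ∃ z, ell z = r ∧ ell (z⁻¹ * g) = ell g - r
  four : ∀ x y z w, ell (x⁻¹ * y) + ell (z⁻¹ * w) ≤
    max (ell (x⁻¹ * z) + ell (y⁻¹ * w)) (ell (x⁻¹ * w) + ell (y⁻¹ * z)) + D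

namespace HypLen

variable {G : Type*} [Group G] {ell : G → ℕ} {D : ℕ}

theorem growth (H : HypLen ell D) (g : G) (hg : ell g + D + 1 ≤ ell (g ^ 2)) (n : ℕ) :
    ell (g ^ n) + 1 ≤ ell (g ^ (n + 1)) ∨ n = 0 := by
  induction n with
  | zero => right; rfl
  | succ n ih =>
    left
    rcases Nat.eq_zero_or_pos n with h0 | hpos
    · subst h0
      simp only [zero_add, pow_one, Nat.reduceAdd]
      omega
    have ih' : ell (g ^ n) + 1 ≤ ell (g ^ (n + 1)) := by omega
    have h4 := H.four 1 (g ^ 2) g (g ^ (n + 2))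
    have e1 : (1 : G)⁻¹ * g ^ 2 = g ^ 2 := by group
    have e2 : g⁻¹ * g ^ (n + 2) = g ^ (n + 1) := by rw [pow_succ' g (n+1)]; group
    have e3 : (1 : G)⁻¹ * g = g := by group
    have e4 : (g ^ 2)⁻¹ * g ^ (n + 2) = g ^ n := by rw [add_comm, pow_add]; group
    have e5 : (1 : G)⁻¹ * g ^ (n + 2) = g ^ (n + 2) := by group
    have e6 : (g ^ 2)⁻¹ * g = g⁻¹ := by group
    rw [e1, e2, e3, e4, e5, e6, H.inv] at h4
    show ell (g ^ (n + 1)) + 1 ≤ ell (g ^ (n + 2))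
    omega

theorem growth' (H : HypLen ell D) (g : G) (hg : ell g + D + 1 ≤ ell (g ^ 2)) (n : ℕ) :
    n ≤ ell (g ^ n) + 1 := by
  induction n with
  | zero => omega
  | succ n ih =>
    rcases H.growth g hg n with h | h
    · omega
    · subst h; omega

theorem exists_hyp (H : HypLen ell D) (h : G) (hh : ∀ n : ℤ, n ≠ 0 → h ^ n ≠ 1) :
    ∃ x : G, ∃ p : ℕ, 0 < p ∧
      ell (x * h ^ p * x⁻¹) + D + 1 ≤ ell ((x * h ^ p * x⁻¹) ^ 2) := by
  by_contra hcon
  push Not at hcon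
  obtain ⟨r, hr⟩ : ∃ r, r = 2 * D + 1 := ⟨_, rfl⟩
  obtain ⟨M, hM⟩ : ∃ M, M = (H.fin (4 * r)).toFinset.card + 1 := ⟨_, rfl⟩
  let F : G → ℕ := fun x => (Finset.Icc 1 M).sup (fun i => ell (x * h ^ i * x⁻¹))
  obtain ⟨x, hx⟩ : ∃ x, ∀ y, F x ≤ F y :=
    ⟨Function.argmin F, fun y => Function.argmin_le F y⟩
  have hMpos : 1 ≤ M := by omega
  have hne : (Finset.Icc 1 M).Nonempty := ⟨1, by simp [hMpos]⟩
  have hFle : ∀ y, ∀ i ∈ Finset.Icc 1 M, ell (y * h ^ i * y⁻¹) ≤ F y := fun y i hi =>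
    Finset.le_sup (f := fun i => ell (y * h ^ i * y⁻¹)) hi
  obtain ⟨j, hj, hFj⟩ := Finset.exists_mem_eq_sup (Finset.Icc 1 M) hne
    (fun i => ell (x * h ^ i * x⁻¹))
  change F x = ell (x * h ^ j * x⁻¹) at hFj
  have hbig : 4 * r < F x := by
    by_contra hle
    push Not at hle
    have := Finset.exists_ne_map_eq_of_card_lt_of_maps_to
      (s := Finset.Icc 1 M) (t := (H.fin (4 * r)).toFinset)
      (f := fun i => x * h ^ i * x⁻¹) (by rw [Nat.card_Icc]; omega)
      (by
        intro i hi
        simp only [Set.Finite.coe_toFinset, Set.mem_ofPred_eq]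
        exact (hFle x i hi).trans hle)
    obtain ⟨a, -, b, -, hab, heq⟩ := this
    simp only [mul_left_inj, mul_right_inj] at heq
    refine hh ((a : ℤ) - b) (by omega) ?_
    rw [zpow_sub, zpow_natCast, zpow_natCast, heq, mul_inv_cancel]
  obtain ⟨k, hk⟩ : ∃ k, k = x * h * x⁻¹ := ⟨_, rfl⟩
  have hkp : ∀ i : ℕ, x * h ^ i * x⁻¹ = k ^ i := fun i => by rw [hk, conj_pow]
  obtain ⟨L, hL⟩ : ∃ L, L = F x := ⟨_, rfl⟩
  rw [← hL] at hFj hbig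
  rw [hkp] at hFj
  have hkL : ∀ i, i ≤ M → ell (k ^ i) ≤ L := by
    intro i hi
    rcases Nat.eq_zero_or_pos i with h0 | h0
    · rw [h0, pow_zero, H.one]; omega
    · rw [← hkp, hL]; exact hFle x i (by simp; omega)
  obtain ⟨z, hz, hz2⟩ := H.geo (k ^ j) r (by omega)
  have key : ∀ i ∈ Finset.Icc 1 M, ell (z⁻¹ * k ^ i * z) < L := by
    intro i hi
    rw [Finset.mem_Icc] at hi hj
    obtain ⟨a, ha⟩ : ∃ a, a = ell (k ^ i) := ⟨_, rfl⟩
    have haL : a ≤ L := ha ▸ hkL i hi.2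
    by_cases har : a < 2 * r
    · have h1 := H.mul (z⁻¹ * k ^ i) z
      have h2 := H.mul z⁻¹ (k ^ i)
      rw [H.inv] at h2
      omega
    push Not at har
    have hd : ell ((k ^ i)⁻¹ * k ^ j) ≤ L := by
      rcases le_total i j with hij | hij
      · have : (k ^ i)⁻¹ * k ^ j = k ^ (j - i) := by
          obtain ⟨c, rfl⟩ := Nat.exists_eq_add_of_le hij
          rw [pow_add, Nat.add_sub_cancel_left]; group
        rw [this]; exact hkL _ (by omega)
      · have : (k ^ i)⁻¹ * k ^ j = (k ^ (i - j))⁻¹ := by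
          obtain ⟨c, rfl⟩ := Nat.exists_eq_add_of_le hij
          rw [add_comm, pow_add, Nat.add_sub_cancel]; group
        rw [this, H.inv]; exact hkL _ (by omega)
    have hsq := hcon x i (by omega)
    rw [hkp] at hsq
    obtain ⟨g, hg⟩ : ∃ g, g = k ^ i := ⟨_, rfl⟩
    rw [← hg] at hsq hd ha ⊢
    have c1 := H.four z g 1 (k ^ j)
    have c2 := H.four z g⁻¹ 1 g
    have c3 := H.four z (g * z) 1 g
    have e1 : z⁻¹ * (g * z) = z⁻¹ * g * z := by group
    have e2 : (g * z)⁻¹ * g = z⁻¹ := by group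
    have e3 : (g * z)⁻¹ = z⁻¹ * g⁻¹ := by group
    have e4 : g⁻¹⁻¹ * g = g ^ 2 := by rw [inv_inv, pow_two]
    simp only [inv_one, one_mul, mul_one, e1, e2, e4] at c1 c2 c3
    simp only [e3, inv_inv, H.inv] at c1 c2 c3
    omega
  have hlt : F (z⁻¹ * x) < L := by
    rw [Finset.sup_lt_iff (by rw [Nat.bot_eq_zero]; omega)]
    intro i hi
    have : z⁻¹ * x * h ^ i * (z⁻¹ * x)⁻¹ = z⁻¹ * k ^ i * z := by
      rw [← hkp]; group
    rw [this]
    exact key i hi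
  have := hx (z⁻¹ * x)
  omega

theorem subadd (H : HypLen ell D) (g : G) : Subadditive (fun n => (ell (g ^ n) : ℝ)) := by
  intro a b
  simp only [pow_add]
  exact_mod_cast H.mul _ _

/-- stable length -/
noncomputable def tau (H : HypLen ell D) (g : G) : ℝ := (H.subadd g).lim

theorem tendsto_tau (H : HypLen ell D) (g : G) :
    Filter.Tendsto (fun n : ℕ => (ell (g ^ n) : ℝ) / n) Filter.atTop (nhds (H.tau g)) := by
  refine (H.subadd g).tendsto_lim ⟨0, ?_⟩
  rintro _ ⟨n, rfl⟩
  positivity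

theorem tau_le (H : HypLen ell D) {g g' : G} (C : ℝ)
    (hC : ∀ n : ℕ, (ell (g ^ n) : ℝ) ≤ ell (g' ^ n) + C) : H.tau g ≤ H.tau g' := by
  have h1 := (H.tendsto_tau g').add (tendsto_const_div_atTop_nhds_zero_nat C)
  rw [add_zero] at h1
  refine le_of_tendsto_of_tendsto' (H.tendsto_tau g) h1 fun n => ?_
  rw [← add_div]
  exact div_le_div_of_nonneg_right (hC n) (by positivity)

theorem tau_inv (H : HypLen ell D) (g : G) : H.tau g⁻¹ = H.tau g := by
  unfold tau
  congr 1
  funext n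
  rw [inv_pow, H.inv]

theorem tau_conj_le (H : HypLen ell D) (x g : G) : H.tau (x * g * x⁻¹) ≤ H.tau g := by
  refine H.tau_le (2 * ell x) fun n => ?_
  rw [conj_pow]
  have h1 := H.mul (x * g ^ n) x⁻¹
  have h2 := H.mul x (g ^ n)
  rw [H.inv] at h1
  have : ell (x * g ^ n * x⁻¹) ≤ ell (g ^ n) + 2 * ell x := by omega
  exact_mod_cast this

theorem tau_pow (H : HypLen ell D) (g : G) (m : ℕ) (hm : 0 < m) :
    H.tau (g ^ m) = m * H.tau g := by
  have h1 := H.tendsto_tau (g ^ m)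
  have h2 := ((H.tendsto_tau g).comp
    (Filter.tendsto_id.const_mul_atTop' hm)).const_mul (m : ℝ)
  refine tendsto_nhds_unique h1 (h2.congr fun n => ?_)
  have hm' : (m : ℝ) ≠ 0 := by positivity
  simp only [Function.comp_apply, id, pow_mul, Nat.cast_mul]
  rw [← mul_div_assoc, mul_div_mul_left _ _ hm']

theorem tau_zpow (H : HypLen ell D) (g : G) (m : ℤ) (hm : m ≠ 0) :
    H.tau (g ^ m) = |(m : ℝ)| * H.tau g := by
  obtain ⟨k, rfl | rfl⟩ := m.eq_nat_or_neg
  · rw [zpow_natCast, H.tau_pow g k (by omega)]; simp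
  · rw [zpow_neg, zpow_natCast, H.tau_inv, H.tau_pow g k (by omega)]; simp

theorem tau_pos (H : HypLen ell D) (h : G) (hh : ∀ n : ℤ, n ≠ 0 → h ^ n ≠ 1) :
    0 < H.tau h := by
  obtain ⟨x, p, hp, hyp⟩ := H.exists_hyp h hh
  have h1 : 1 ≤ H.tau (x * h ^ p * x⁻¹) := by
    have ht := (H.tendsto_tau (x * h ^ p * x⁻¹)).add
      (tendsto_const_div_atTop_nhds_zero_nat (1 : ℝ))
    rw [add_zero] at ht
    refine ge_of_tendsto ht ?_
    filter_upwards [Filter.eventually_gt_atTop 0] with n hn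
    rw [← add_div, le_div_iff₀ (by positivity), one_mul]
    exact_mod_cast H.growth' _ hyp n
  have h2 := H.tau_conj_le x (h ^ p)
  rw [H.tau_pow h p hp] at h2
  have hp' : (0 : ℝ) < p := by positivity
  by_contra hcon
  nlinarith

theorem flip (H : HypLen ell D) (u g : G) (hu : u * g * u⁻¹ = g⁻¹)
    (hg : ∀ n : ℤ, n ≠ 0 → g ^ n ≠ 1) (hu2 : ∀ n : ℤ, n ≠ 0 → (u ^ 2) ^ n ≠ 1) : False := by
  have p1 := H.tau_pos g hg
  have p2 := H.tau_pos (u ^ 2) hu2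
  have hcomm : Commute g (u ^ 2) := by
    have hinv : u * g⁻¹ * u⁻¹ = g := by
      rw [← conj_inv, hu, inv_inv]
    have : u ^ 2 * g * (u ^ 2)⁻¹ = g := by
      calc u ^ 2 * g * (u ^ 2)⁻¹ = u * (u * g * u⁻¹) * u⁻¹ := by rw [pow_two]; group
        _ = g := by rw [hu, hinv]
    exact (mul_inv_eq_iff_eq_mul.mp this).symm
  have hin : ∀ n : ℕ, ell ((g ^ 2) ^ n) + ell (((u ^ 2) ^ 2) ^ n) ≤
      2 * max (ell (g ^ n)) (ell ((u ^ 2) ^ n)) + (2 * D + 2 * ell u) := by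
    intro n
    obtain ⟨x, hx⟩ : ∃ x, x = g ^ n := ⟨_, rfl⟩
    obtain ⟨y, hy⟩ : ∃ y, y = (u ^ 2) ^ n := ⟨_, rfl⟩
    have hxy : x * y = y * x := by rw [hx, hy]; exact hcomm.pow_pow n n
    have hux : u * x * u⁻¹ = x⁻¹ := by rw [hx, ← conj_pow, hu, inv_pow]
    have huy : u * y * u⁻¹ = y := by
      have : Commute u y := by
        rw [hy]; exact ((Commute.refl u).pow_right 2).pow_right n
      rw [this.eq]; group
    have huxy : u * (x * y) * u⁻¹ = x⁻¹ * y := by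
      calc u * (x * y) * u⁻¹ = (u * x * u⁻¹) * (u * y * u⁻¹) := by group
        _ = x⁻¹ * y := by rw [hux, huy]
    have huxy' : u⁻¹ * (x⁻¹ * y) * u = x * y := by
      rw [← huxy]; group
    rw [pow_right_comm g, pow_right_comm (u ^ 2), ← hx, ← hy]
    have c1 := H.four 1 (x * y) x y
    have c2 := H.four 1 (x * x) (x * y) (x * y⁻¹)
    have a1 := H.mul (u⁻¹ * (x⁻¹ * y)) u
    have a2 := H.mul u⁻¹ (x⁻¹ * y)
    have a3 := H.mul (u * (x * y)) u⁻¹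
    have a4 := H.mul u (x * y)
    rw [huxy'] at a1
    rw [huxy] at a3
    have hc : Commute x y := hxy
    have e1 : (x * y)⁻¹ * x = y⁻¹ := by group
    have e2 : (x * y)⁻¹ * y = x⁻¹ := by rw [hxy]; group
    have e3 : (x * y)⁻¹ * (x * y⁻¹) = (y ^ 2)⁻¹ := by group
    have e4 : (x * x)⁻¹ * (x * y⁻¹) = (x * y)⁻¹ := by
      rw [mul_inv_rev, mul_inv_rev, ← hc.inv_inv.eq]; group
    have e5 : (x * x)⁻¹ * (x * y) = x⁻¹ * y := by group
    have e6 : x * y⁻¹ = (x⁻¹ * y)⁻¹ := by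
      rw [mul_inv_rev, inv_inv]; exact hc.inv_right.eq
    rw [e1, e2] at c1
    rw [e3, e4, e5, e6] at c2
    simp only [inv_one, one_mul, H.inv, ← pow_two] at c1 c2 a1 a2 a3 a4
    omega
  have t1 := H.tendsto_tau (g ^ 2)
  have t2 := H.tendsto_tau ((u ^ 2) ^ 2)
  rw [H.tau_pow _ 2 (by norm_num)] at t1 t2
  have t3 := (((H.tendsto_tau g).max (H.tendsto_tau (u ^ 2))).const_mul 2).add
    (tendsto_const_div_atTop_nhds_zero_nat ((2 * D + 2 * ell u : ℕ) : ℝ))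
  have hle := le_of_tendsto_of_tendsto' (t1.add t2) t3 (fun n => by
    rw [← add_div, max_div_div_right (by positivity), ← mul_div_assoc, ← add_div]
    refine div_le_div_of_nonneg_right ?_ (by positivity)
    exact_mod_cast hin n)
  rcases max_cases (H.tau g) (H.tau (u ^ 2)) with h | h <;> push_cast at hle <;> linarith

end HypLen

/-- words -/
def IsWord {G : Type*} [Group G] (S : Set G) (l : List G) : Prop := ∀ x ∈ l, x ∈ S ∨ x⁻¹ ∈ S

/-- word length -/
noncomputable def wlen {G : Type*} [Group G] (S : Set G) (g : G) : ℕ :=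
  sInf {n | ∃ l : List G, IsWord S l ∧ l.prod = g ∧ l.length = n}

section
variable {G : Type*} [Group G] {S : Set G}

theorem wlen_le {l : List G} (hl : IsWord S l) : wlen S l.prod ≤ l.length :=
  Nat.sInf_le ⟨l, hl, rfl, rfl⟩

theorem IsWord.append {l l' : List G} (h : IsWord S l) (h' : IsWord S l') :
    IsWord S (l ++ l') := by
  intro x hx
  rcases List.mem_append.mp hx with hx | hx
  · exact h x hx
  · exact h' x hx

theorem IsWord.inv {l : List G} (h : IsWord S l) :
    IsWord S (l.map fun x => x⁻¹).reverse := by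
  intro x hx
  simp only [List.mem_reverse, List.mem_map] at hx
  obtain ⟨y, hy, rfl⟩ := hx
  rw [inv_inv]
  exact (h y hy).symm

theorem exists_word (hS : Subgroup.closure S = ⊤) (g : G) :
    ∃ l : List G, IsWord S l ∧ l.prod = g := by
  have hg : g ∈ Subgroup.closure S := hS ▸ Subgroup.mem_top g
  rw [← Subgroup.mem_toSubmonoid, Subgroup.closure_toSubmonoid] at hg
  obtain ⟨l, hl, hp⟩ := Submonoid.exists_list_of_mem_closure hg
  exact ⟨l, fun x hx => hl x hx, hp⟩

theorem exists_wlen (hS : Subgroup.closure S = ⊤) (g : G) :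
    ∃ l : List G, IsWord S l ∧ l.prod = g ∧ l.length = wlen S g := by
  obtain ⟨l, hl, hg⟩ := exists_word hS g
  exact Nat.sInf_mem (s := {n | ∃ l : List G, IsWord S l ∧ l.prod = g ∧ l.length = n})
    ⟨_, l, hl, hg, rfl⟩

theorem wordDist_eq (hS : Subgroup.closure S = ⊤) (g h : G) :
    wordDist S g h = wlen S (g⁻¹ * h) := by
  apply le_antisymm
  · obtain ⟨l, hl, hg, hlen⟩ := exists_wlen hS (g⁻¹ * h)
    exact csInf_le ⟨0, by rintro _ ⟨l, -, -, rfl⟩; positivity⟩ ⟨l, hl, hg, by rw [hlen]⟩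
  · obtain ⟨l, hl, hg, hlen⟩ := exists_wlen hS (g⁻¹ * h)
    refine le_csInf ⟨_, l, hl, hg, rfl⟩ ?_
    rintro _ ⟨l, hl, hg, rfl⟩
    rw [← hg]
    exact_mod_cast wlen_le hl

theorem wlen_inv_le (hS : Subgroup.closure S = ⊤) (g : G) : wlen S g⁻¹ ≤ wlen S g := by
  obtain ⟨l, hl, rfl, hlen⟩ := exists_wlen hS g
  rw [← hlen, List.prod_inv_reverse]
  refine (wlen_le hl.inv).trans ?_
  simp

theorem wlen_mul_le (hS : Subgroup.closure S = ⊤) (g h : G) :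
    wlen S (g * h) ≤ wlen S g + wlen S h := by
  obtain ⟨l, hl, rfl, hlen⟩ := exists_wlen hS g
  obtain ⟨l', hl', rfl, hlen'⟩ := exists_wlen hS h
  rw [← hlen, ← hlen', ← List.prod_append, ← List.length_append]
  exact wlen_le (hl.append hl')

theorem hypLen_wlen (hf : S.Finite) (hS : Subgroup.closure S = ⊤) (δ : ℝ)
    (hδ : ∀ w x y z : G,
      gromovProd S w x y ≥ min (gromovProd S w x z) (gromovProd S w y z) - δ) :
    HypLen (wlen S) ⌈2 * δ⌉₊ where
  one := by
    have := wlen_le (S := S) (l := []) (by intro x hx; simp at hx)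
    simpa using this
  inv g := by
    refine le_antisymm (wlen_inv_le hS g) ?_
    simpa using wlen_inv_le hS g⁻¹
  mul := wlen_mul_le hS
  fin R := by
    have hT : (S ∪ S⁻¹).Finite := hf.union hf.inv
    have hfin : {l : List (G) | (∀ x ∈ l, x ∈ S ∪ S⁻¹) ∧ l.length ≤ R}.Finite := by
      have h2 : Finite ↥(S ∪ S⁻¹) := hT
      refine ((List.finite_length_le ↥(S ∪ S⁻¹) R).image (List.map Subtype.val)).subset ?_
      rintro l ⟨hl, hlen⟩
      lift l to List ↥(S ∪ S⁻¹) using hl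
      exact ⟨l, by simpa using hlen, rfl⟩
    refine (hfin.image List.prod).subset ?_
    intro g hg
    obtain ⟨l, hl, hp, hlen⟩ := exists_wlen hS g
    refine ⟨l, ⟨fun x hx => ?_, ?_⟩, hp⟩
    · rcases hl x hx with h | h
      · exact Or.inl h
      · exact Or.inr h
    · rw [hlen]; exact hg
  geo g r hr := by
    obtain ⟨l, hl, hp, hlen⟩ := exists_wlen hS g
    have ht : IsWord S (l.take r) := fun x hx => hl x (List.mem_of_mem_take hx)
    have hd : IsWord S (l.drop r) := fun x hx => hl x (List.mem_of_mem_drop hx)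
    have hpr : (l.take r).prod * (l.drop r).prod = g := by
      rw [← List.prod_append, List.take_append_drop, hp]
    have e : ((l.take r).prod)⁻¹ * g = (l.drop r).prod := by rw [← hpr]; group
    have h1 := wlen_le ht
    have h2 := wlen_le hd
    have h3 := wlen_mul_le hS (l.take r).prod (l.drop r).prod
    rw [hpr] at h3
    rw [List.length_take] at h1
    rw [List.length_drop] at h2
    refine ⟨(l.take r).prod, ?_, ?_⟩
    · omega
    · rw [e]; omega
  four x y z w := by
    have h := hδ w x y z
    simp only [gromovProd, wordDist_eq hS] at h
    have hc := Nat.le_ceil (2 * δ)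
    have : ((wlen S (x⁻¹ * y) + wlen S (z⁻¹ * w) : ℕ) : ℝ) ≤
      ((max (wlen S (x⁻¹ * z) + wlen S (y⁻¹ * w)) (wlen S (x⁻¹ * w) + wlen S (y⁻¹ * z))
        + ⌈2 * δ⌉₊ : ℕ) : ℝ) := by
      push_cast
      have m1 := le_max_left ((wlen S (x⁻¹ * z) : ℝ) + wlen S (y⁻¹ * w))
        (wlen S (x⁻¹ * w) + wlen S (y⁻¹ * z))
      have m2 := le_max_right ((wlen S (x⁻¹ * z) : ℝ) + wlen S (y⁻¹ * w))
        (wlen S (x⁻¹ * w) + wlen S (y⁻¹ * z))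
      rcases min_choice (((wlen S (x⁻¹ * w) : ℝ) + wlen S (z⁻¹ * w) - wlen S (x⁻¹ * z)) / 2)
        ((wlen S (y⁻¹ * w) + wlen S (z⁻¹ * w) - wlen S (y⁻¹ * z)) / 2) with h' | h' <;>
      rw [h'] at h <;> linarith
    exact_mod_cast this

end

/-- In a torsion-free hyperbolic group, an element `ω` is conjugate to at most one power
of a nontrivial element `h`. -/
theorem stmt_13 {G : Type*} [Group G] (hG : IsHyperbolicGroup G)
    (htf : ∀ g : G, g ≠ 1 → ∀ n : ℤ, n ≠ 0 → g ^ n ≠ 1)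
    (h : G) (hh : h ≠ 1) (ω : G) (m n : ℤ)
    (hm : ∃ u : G, h ^ m = u * ω * u⁻¹)
    (hn : ∃ u : G, h ^ n = u * ω * u⁻¹) :
    m = n := by
  obtain ⟨S, hf, hS, δ, -, hδ⟩ := hG
  have H := hypLen_wlen hf hS δ hδ
  obtain ⟨u, hu⟩ := hm
  obtain ⟨v, hv⟩ := hn
  obtain ⟨t, ht⟩ : ∃ t, t = v * u⁻¹ := ⟨_, rfl⟩
  have hc : t * h ^ m * t⁻¹ = h ^ n := by rw [hu, hv, ht]; group
  have hc' : t⁻¹ * h ^ n * t⁻¹⁻¹ = h ^ m := by rw [← hc]; group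
  by_cases hm0 : m = 0
  · by_contra hne
    refine htf h hh n (by omega) ?_
    rw [← hc, hm0]; group
  by_cases hn0 : n = 0
  · by_contra hne
    refine htf h hh m hm0 ?_
    rw [← hc', hn0]; group
  have hpos := H.tau_pos h (htf h hh)
  have e1 := H.tau_conj_le t (h ^ m)
  have e2 := H.tau_conj_le t⁻¹ (h ^ n)
  rw [hc] at e1
  rw [hc'] at e2
  have e3 := le_antisymm e1 e2
  rw [H.tau_zpow h m hm0, H.tau_zpow h n hn0] at e3
  have e4 : |(n : ℝ)| = |(m : ℝ)| := mul_right_cancel₀ hpos.ne' e3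
  have e5 : |n| = |m| := by exact_mod_cast e4
  rcases abs_eq_abs.mp e5 with h5 | h5
  · exact h5.symm
  exfalso
  rw [h5, zpow_neg] at hc
  have hg1 : h ^ m ≠ 1 := htf h hh m hm0
  have ht1 : t ≠ 1 := by
    rintro h1
    rw [h1] at hc
    refine htf h hh (m + m) (by omega) ?_
    rw [zpow_add]
    nth_rewrite 1 [← inv_inv (h ^ m)]
    rw [← hc]; group
  refine H.flip t (h ^ m) hc (htf _ hg1) ?_
  have ht2 : t ^ 2 ≠ 1 := by
    have := htf t ht1 2 (by norm_num)
    exact_mod_cast this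
  exact htf _ ht2
end
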